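/- arXiv:2206.14736 — 8 statements merged into one kernel-verified Lean document; each statement's English description precedes it below -/
import Mathlib

section
/- Let D be a positive integer, I a finite set, and r : I → ℕ a function with r(i) ≥ 1 for all i ∈ I. Let K ≥ 0 and ℓ ≥ 0 be real numbers such that for every integer s ≥ 1 the cardinality of {i ∈ I : r(i) = s} is at most K·(ℓ+s)^D. Let ξ, κ, Φ, q be positive reals with q ≥ (ξ·κ)^κ · Φ. Then ∑_{i∈I} exp(−(q·e^{r(i)/ξ}/Φ)^{1/κ}) ≤ K · 2^{2D+2} · D! · max(ℓ^D, 1) · exp(−(q/Φ)^{1/κ}/(ξ·κ)). -/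
/-! Write `a = (q/Φ)^(1/κ)` and `c = ξκ`; the hypothesis on `q` says exactly that `c ≤ a`. The
summand at distance `s` is `exp (-a e^(s/c))`, which by `t ≤ e^t` is at most `y ^ s` with
`y = exp (-a/c) ≤ e⁻¹ ≤ 1/2`. One factor `y` is kept and the other `s - 1` are replaced by `1/2`.
As `(ℓ + s)^D ≤ max (ℓ^D) 1 * D! * (s + D).choose D`, the sum over the level sets of `r` is then
controlled by the series `∑ (s + D).choose D * x^s = (1 - x)^(-(D + 1))` at `x = 1/2`. -/

open Finset
open scoped Nat

section Counting

variable {I : Type*} {S : Finset I}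

theorem add_natCast_pow_le_max_mul_factorial_mul_choose {ℓ : ℝ} (hℓ : 0 ≤ ℓ) (n D : ℕ) :
    (ℓ + n) ^ D ≤ max (ℓ ^ D) 1 * (D ! * (n + D).choose D) := by
  have add_le : ℓ + n ≤ max ℓ 1 * (n + 1) := by
    nlinarith [le_max_left ℓ 1, le_max_right ℓ 1, n.cast_nonneg (α := ℝ)]
  have max_pow : max ℓ 1 ^ D = max (ℓ ^ D) 1 := by
    rw [(pow_left_monotoneOn (n := D)).map_max hℓ zero_le_one, one_pow]
  have pow_le : ((n : ℝ) + 1) ^ D ≤ D ! * (n + D).choose D := by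
    exact_mod_cast (Nat.pow_succ_le_ascFactorial (n + 1) D).trans_eq
      (Nat.ascFactorial_eq_factorial_mul_choose n D)
  calc (ℓ + n) ^ D ≤ (max ℓ 1 * (n + 1)) ^ D := by gcongr
    _ = max (ℓ ^ D) 1 * ((n : ℝ) + 1) ^ D := by rw [mul_pow, max_pow]
    _ ≤ max (ℓ ^ D) 1 * (D ! * (n + D).choose D) := by gcongr

theorem card_fiber_le_mul_choose {r : I → ℕ} (hr : ∀ i, 1 ≤ r i) {K ℓ : ℝ} {D : ℕ} (hK : 0 ≤ K)
    (hℓ : 0 ≤ ℓ) (hfin : ∀ s, 1 ≤ s → {i | r i = s}.Finite)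
    (hcard : ∀ s : ℕ, 1 ≤ s → ({i | r i = s}.ncard : ℝ) ≤ K * (ℓ + s) ^ D) (s : ℕ) :
    (#{i ∈ S | r i = s} : ℝ) ≤ K * max (ℓ ^ D) 1 * D ! * (s + D).choose D := by
  obtain rfl | hs := s.eq_zero_or_pos
  · rw [filter_false_of_mem fun i _ ↦ Nat.ne_zero_of_lt (hr i), card_empty, Nat.cast_zero]
    positivity
  calc (#{i ∈ S | r i = s} : ℝ) ≤ {i | r i = s}.ncard := by
        rw [← Set.ncard_coe_finset]
        exact_mod_cast Set.ncard_le_ncard (fun i hi ↦ (mem_filter.mp hi).2) (hfin s hs)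
    _ ≤ K * (ℓ + s) ^ D := hcard s hs
    _ ≤ K * (max (ℓ ^ D) 1 * (D ! * (s + D).choose D)) := by
        gcongr
        exact add_natCast_pow_le_max_mul_factorial_mul_choose hℓ s D
    _ = K * max (ℓ ^ D) 1 * D ! * (s + D).choose D := by ring

theorem sum_comp_le_tsum_of_card_fiber_le {ι : Type*} [DecidableEq ι] {r : I → ι} {b f : ι → ℝ}
    (hcard : ∀ s, (#{i ∈ S | r i = s} : ℝ) ≤ b s) (hf : ∀ s, 0 ≤ f s)
    (hbf : Summable fun s ↦ b s * f s) :
    ∑ i ∈ S, f (r i) ≤ ∑' s, b s * f s := by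
  have hb (s : ι) : 0 ≤ b s := (Nat.cast_nonneg _).trans (hcard s)
  calc ∑ i ∈ S, f (r i) = ∑ s ∈ S.image r, #{i ∈ S | r i = s} * f s := by
        simp only [sum_comp f r, nsmul_eq_mul]
    _ ≤ ∑ s ∈ S.image r, b s * f s :=
        sum_le_sum fun s _ ↦ mul_le_mul_of_nonneg_right (hcard s) (hf s)
    _ ≤ ∑' s, b s * f s := hbf.sum_le_tsum _ fun s _ ↦ mul_nonneg (hb s) (hf s)

theorem sum_pow_le_of_card_fiber_le_mul_choose {r : I → ℕ} {C x : ℝ} {D : ℕ}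
    (hcard : ∀ s, (#{i ∈ S | r i = s} : ℝ) ≤ C * (s + D).choose D) (hx : 0 ≤ x) (hx1 : x < 1) :
    ∑ i ∈ S, x ^ r i ≤ C / (1 - x) ^ (D + 1) := by
  have norm_lt : ‖x‖ < 1 := by rwa [Real.norm_of_nonneg hx]
  have hsum : HasSum (fun s : ℕ ↦ C * (s + D).choose D * x ^ s) (C / (1 - x) ^ (D + 1)) := by
    simpa only [mul_assoc, mul_one_div] using
      (hasSum_choose_mul_geometric_of_norm_lt_one D norm_lt).mul_left C
  exact (sum_comp_le_tsum_of_card_fiber_le hcard (fun s ↦ pow_nonneg hx s)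
    hsum.summable).trans_eq hsum.tsum_eq

end Counting

theorem exp_neg_mul_exp_div_le_pow {a : ℝ} (ha : 0 ≤ a) (c : ℝ) (n : ℕ) :
    Real.exp (-(a * Real.exp (n / c))) ≤ Real.exp (-a / c) ^ n := by
  have le_exp : (n : ℝ) / c ≤ Real.exp (n / c) := by linarith [Real.add_one_le_exp ((n : ℝ) / c)]
  calc Real.exp (-(a * Real.exp (n / c))) ≤ Real.exp (-(a * (n / c))) := by gcongr
    _ = Real.exp (-a / c) ^ n := by rw [← Real.exp_nat_mul]; ring_nf

theorem exp_neg_mul_exp_div_le_geometric {a c : ℝ} (hc : 0 < c) (hca : c ≤ a) {n : ℕ}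
    (hn : 1 ≤ n) :
    Real.exp (-(a * Real.exp (n / c))) ≤ 2 * Real.exp (-a / c) * (1 / 2) ^ n := by
  have exp_le_half : Real.exp (-a / c) ≤ 1 / 2 := by
    calc Real.exp (-a / c) ≤ Real.exp (-1) := by
          gcongr
          rwa [div_le_iff₀ hc, neg_one_mul, neg_le_neg_iff]
      _ ≤ 1 / 2 := by linarith [Real.exp_neg_one_lt_half]
  obtain ⟨m, rfl⟩ := Nat.exists_eq_add_of_le' hn
  calc Real.exp (-(a * Real.exp ((m + 1 : ℕ) / c))) ≤ Real.exp (-a / c) ^ (m + 1) :=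
        exp_neg_mul_exp_div_le_pow (hc.le.trans hca) c (m + 1)
    _ ≤ (1 / 2) ^ m * Real.exp (-a / c) := by rw [pow_succ]; gcongr
    _ = 2 * Real.exp (-a / c) * (1 / 2) ^ (m + 1) := by ring

theorem mul_exp_div_rpow_one_div {q Φ : ℝ} (h : 0 ≤ q / Φ) (x ξ κ : ℝ) :
    (q * Real.exp (x / ξ) / Φ) ^ (1 / κ) = (q / Φ) ^ (1 / κ) * Real.exp (x / (ξ * κ)) := by
  rw [mul_div_right_comm, Real.mul_rpow h (Real.exp_pos _).le, ← Real.exp_mul, div_mul_div_comm,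
    mul_one]

theorem stmt_2_general {I : Type*} (D : ℕ) (r : I → ℕ) (hr : ∀ i, 1 ≤ r i) (K ℓ : ℝ)
    (hK : 0 ≤ K) (hℓ : 0 ≤ ℓ) (hfin : ∀ s, 1 ≤ s → {i | r i = s}.Finite)
    (hcard : ∀ s : ℕ, 1 ≤ s → ({i | r i = s}.ncard : ℝ) ≤ K * (ℓ + s) ^ D)
    (ξ κ Φ q : ℝ) (hξ : 0 < ξ) (hκ : 0 < κ) (hΦ : 0 < Φ) (hqΦ : (ξ * κ) ^ κ * Φ ≤ q) :
    Summable (fun i ↦ Real.exp (-(q * Real.exp (r i / ξ) / Φ) ^ (1 / κ))) ∧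
      ∑' i, Real.exp (-(q * Real.exp (r i / ξ) / Φ) ^ (1 / κ)) ≤
        K * 2 ^ (D + 2) * D ! * max (ℓ ^ D) 1 * Real.exp (-(q / Φ) ^ (1 / κ) / (ξ * κ)) := by
  have hc : 0 < ξ * κ := mul_pos hξ hκ
  have le_ratio : (ξ * κ) ^ κ ≤ q / Φ := (le_div_iff₀ hΦ).mpr hqΦ
  have ratio_nonneg : 0 ≤ q / Φ := (Real.rpow_nonneg hc.le κ).trans le_ratio
  have scale_le : ξ * κ ≤ (q / Φ) ^ (1 / κ) := by
    rwa [one_div, Real.le_rpow_inv_iff_of_pos hc.le ratio_nonneg hκ]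
  set y := Real.exp (-(q / Φ) ^ (1 / κ) / (ξ * κ))
  have term_le (i : I) :
      Real.exp (-(q * Real.exp (r i / ξ) / Φ) ^ (1 / κ)) ≤ 2 * y * (1 / 2) ^ r i := by
    rw [mul_exp_div_rpow_one_div ratio_nonneg]
    exact exp_neg_mul_exp_div_le_geometric hc scale_le (hr i)
  have sum_le (S : Finset I) : ∑ i ∈ S, Real.exp (-(q * Real.exp (r i / ξ) / Φ) ^ (1 / κ)) ≤
      K * 2 ^ (D + 2) * D ! * max (ℓ ^ D) 1 * y := by
    calc _ ≤ 2 * y * ∑ i ∈ S, (1 / 2) ^ r i := by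
          rw [mul_sum]
          exact sum_le_sum fun i _ ↦ term_le i
      _ ≤ 2 * y * (K * max (ℓ ^ D) 1 * D ! / (1 - 1 / 2) ^ (D + 1)) := by
          gcongr
          exact sum_pow_le_of_card_fiber_le_mul_choose
            (card_fiber_le_mul_choose hr hK hℓ hfin hcard) (by norm_num) (by norm_num)
      _ = K * 2 ^ (D + 2) * D ! * max (ℓ ^ D) 1 * y := by
          rw [show (1 - 1 / 2 : ℝ) = 2⁻¹ by norm_num, inv_pow, div_inv_eq_mul]
          ring
  exact ⟨summable_of_sum_le (fun i ↦ (Real.exp_pos _).le) sum_le,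
    Real.tsum_le_of_sum_le (fun i ↦ (Real.exp_pos _).le) sum_le⟩

/-- Lemma 1 (iii) of the paper.
Let `D ≥ 1`, `I` a finite set, `r : I → ℕ` with `r i ≥ 1`, and `K, ℓ ≥ 0` such
that for every `s ≥ 1` the level set `{i : r i = s}` has cardinality at most
`K (ℓ + s)^D`.  Let `ξ, κ, Φ, q > 0` with `q ≥ (ξκ)^κ Φ`.  Then
`∑_{i ∈ I} exp(-(q e^{r(i)/ξ}/Φ)^{1/κ})
   ≤ K 2^{2D+2} D! max(ℓ^D, 1) exp(-(q/Φ)^{1/κ}/(ξκ))`. -/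
theorem stmt_2 {I : Type*} [Fintype I] (D : ℕ) (hD : 0 < D) (r : I → ℕ)
    (hr : ∀ i : I, 1 ≤ r i) (K ℓ : ℝ) (hK : 0 ≤ K) (hℓ : 0 ≤ ℓ)
    (hcard : ∀ s : ℕ, 1 ≤ s →
      ((Finset.univ.filter fun i : I => r i = s).card : ℝ) ≤ K * (ℓ + (s : ℝ)) ^ D)
    (ξ κ Φ q : ℝ) (hξ : 0 < ξ) (hκ : 0 < κ) (hΦ : 0 < Φ) (hq : 0 < q)
    (hqΦ : (ξ * κ) ^ κ * Φ ≤ q) :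
    ∑ i : I, Real.exp (-(q * Real.exp ((r i : ℝ) / ξ) / Φ) ^ (1 / κ)) ≤
      K * 2 ^ (2 * D + 2) * (Nat.factorial D : ℝ) * max (ℓ ^ D) 1 *
        Real.exp (-(q / Φ) ^ (1 / κ) / (ξ * κ)) := by
  have ncard_le (s : ℕ) (hs : 1 ≤ s) : ({i | r i = s}.ncard : ℝ) ≤ K * (ℓ + s) ^ D := by
    simpa only [Set.ncard_eq_toFinset_card', Set.toFinset_ofPred] using hcard s hs
  rw [← tsum_fintype (L := .unconditional I)]
  refine (stmt_2_general D r hr K ℓ hK hℓ (fun s _ ↦ Set.toFinite _) ncard_le ξ κ Φ q hξ hκ hΦ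
    hqΦ).2.trans ?_
  gcongr
  · norm_num
  · omega
end

section
/- For every natural number s and all positive real numbers Φ and κ, the series ∑_{x=1}^∞ (x−1)^s · exp(−(x/Φ)^{1/κ}) converges and satisfies ∑_{x=1}^∞ (x−1)^s · exp(−(x/Φ)^{1/κ}) ≤ Φ^{s+1} · κ · Γ(κ·(s+1)), where Γ denotes the Gamma function. -/
/-!
On `[n, n + 1]` the increasing factor `x ^ s` is at least its value at `n`, and the decreasing
factor `exp (-(x / Φ) ^ (1 / κ))` is at least its value at `n + 1`. Hence the `n`-th term of the
series is at most the integral of the product over `[n, n + 1]`, and the whole series is at most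
the integral over `(0, ∞)`, which is a Gamma integral rescaled by `Φ`.
-/

open MeasureTheory Set

section SumIntegralComparison

variable {f g : ℝ → ℝ}

lemma sum_range_mul_add_one_le_integral_Ioi (hf : MonotoneOn f (Ici 0))
    (hf_nonneg : ∀ x, 0 ≤ x → 0 ≤ f x) (hg : AntitoneOn g (Ici 0))
    (hg_nonneg : ∀ x, 0 ≤ x → 0 ≤ g x) (hfg : IntegrableOn (fun x ↦ f x * g x) (Ioi 0)) (N : ℕ) :
    ∑ n ∈ Finset.range N, f n * g (n + 1) ≤ ∫ x in Ioi 0, f x * g x := by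
  have hg_shift : AntitoneOn (fun x ↦ g (x + 1)) (Icc (((0 : ℕ) : ℝ) - 1) ((N : ℝ) - 1)) :=
    fun x hx y hy hxy ↦ hg (by grind) (by grind) (by linarith)
  have hfg_nonneg : ∀ x ∈ Ioi (0 : ℝ), 0 ≤ f x * g x := fun x hx ↦
    mul_nonneg (hf_nonneg x (le_of_lt hx)) (hg_nonneg x (le_of_lt hx))
  calc ∑ n ∈ Finset.range N, f n * g (n + 1)
      ≤ ∫ x in (0 : ℝ)..N, f x * g x := by
        simpa using sum_mul_Ico_le_integral_of_monotone_antitone (Nat.zero_le N)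
          (hf.mono (by simpa using Icc_subset_Ici_self)) hg_shift
          (by simpa using hf_nonneg 0 le_rfl)
          (by simpa using hg_nonneg N N.cast_nonneg)
    _ = ∫ x in Ioc (0 : ℝ) N, f x * g x := intervalIntegral.integral_of_le N.cast_nonneg
    _ ≤ ∫ x in Ioi 0, f x * g x :=
        setIntegral_mono_set hfg (ae_restrict_of_forall_mem measurableSet_Ioi hfg_nonneg)
          Ioc_subset_Ioi_self.eventuallyLE

lemma summable_mul_add_one_of_integrableOn_Ioi (hf : MonotoneOn f (Ici 0))
    (hf_nonneg : ∀ x, 0 ≤ x → 0 ≤ f x) (hg : AntitoneOn g (Ici 0))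
    (hg_nonneg : ∀ x, 0 ≤ x → 0 ≤ g x) (hfg : IntegrableOn (fun x ↦ f x * g x) (Ioi 0)) :
    Summable fun n : ℕ ↦ f n * g (n + 1) :=
  summable_of_sum_range_le
    (fun n ↦ mul_nonneg (hf_nonneg n n.cast_nonneg) (hg_nonneg (n + 1) (by positivity)))
    (sum_range_mul_add_one_le_integral_Ioi hf hf_nonneg hg hg_nonneg hfg)

lemma tsum_mul_add_one_le_integral_Ioi (hf : MonotoneOn f (Ici 0))
    (hf_nonneg : ∀ x, 0 ≤ x → 0 ≤ f x) (hg : AntitoneOn g (Ici 0))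
    (hg_nonneg : ∀ x, 0 ≤ x → 0 ≤ g x) (hfg : IntegrableOn (fun x ↦ f x * g x) (Ioi 0)) :
    ∑' n : ℕ, f n * g (n + 1) ≤ ∫ x in Ioi 0, f x * g x :=
  Real.tsum_le_of_sum_range_le
    (fun n ↦ mul_nonneg (hf_nonneg n n.cast_nonneg) (hg_nonneg (n + 1) (by positivity)))
    (sum_range_mul_add_one_le_integral_Ioi hf hf_nonneg hg hg_nonneg hfg)

end SumIntegralComparison

section GammaIntegral

variable {Φ p q : ℝ}

lemma eqOn_rpow_mul_exp_neg_div_rpow (hΦ : 0 ≤ Φ) :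
    EqOn (fun x ↦ x ^ q * Real.exp (-(x / Φ) ^ p))
      (fun x ↦ x ^ q * Real.exp (-Φ ^ (-p) * x ^ p)) (Ioi 0) := by
  intro x hx
  have exponent_eq : -(x / Φ) ^ p = -Φ ^ (-p) * x ^ p := by
    rw [Real.div_rpow (le_of_lt hx) hΦ, Real.rpow_neg hΦ]
    ring
  simp only [exponent_eq]

lemma integrableOn_rpow_mul_exp_neg_div_rpow (hΦ : 0 < Φ) (hp : 0 < p) (hq : -1 < q) :
    IntegrableOn (fun x ↦ x ^ q * Real.exp (-(x / Φ) ^ p)) (Ioi 0) :=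
  (integrableOn_rpow_mul_exp_neg_mul_rpow hq hp (Real.rpow_pos_of_pos hΦ (-p))).congr_fun
    (eqOn_rpow_mul_exp_neg_div_rpow hΦ.le).symm measurableSet_Ioi

lemma integral_rpow_mul_exp_neg_div_rpow (hΦ : 0 < Φ) (hp : 0 < p) (hq : -1 < q) :
    ∫ x in Ioi 0, x ^ q * Real.exp (-(x / Φ) ^ p) =
      Φ ^ (q + 1) * (1 / p) * Real.Gamma ((q + 1) / p) := by
  have scale_eq : (Φ ^ (-p)) ^ (-(q + 1) / p) = Φ ^ (q + 1) := by
    rw [← Real.rpow_mul hΦ.le]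
    congr 1
    field_simp
  rw [setIntegral_congr_fun measurableSet_Ioi (eqOn_rpow_mul_exp_neg_div_rpow hΦ.le),
    integral_rpow_mul_exp_neg_mul_rpow hp hq (Real.rpow_pos_of_pos hΦ (-p)), scale_eq]

end GammaIntegral

lemma antitoneOn_exp_neg_div_rpow {Φ p : ℝ} (hΦ : 0 ≤ Φ) (hp : 0 ≤ p) :
    AntitoneOn (fun x ↦ Real.exp (-(x / Φ) ^ p)) (Ici 0) := by
  intro x (hx : 0 ≤ x) y _ hxy
  dsimp only
  gcongr

theorem stmt_3_general (s Φ κ : ℝ) (hs : 0 ≤ s) (hΦ : 0 < Φ) (hκ : 0 < κ) :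
    Summable (fun n : ℕ ↦ (n : ℝ) ^ s * Real.exp (-(((n : ℝ) + 1) / Φ) ^ (1 / κ))) ∧
      ∑' n : ℕ, (n : ℝ) ^ s * Real.exp (-(((n : ℝ) + 1) / Φ) ^ (1 / κ)) ≤
        Φ ^ (s + 1) * κ * Real.Gamma (κ * (s + 1)) := by
  have hp : 0 < 1 / κ := one_div_pos.mpr hκ
  have hs' : -1 < s := by linarith
  have hf : MonotoneOn (fun x : ℝ ↦ x ^ s) (Ici 0) :=
    Real.monotoneOn_rpow_Ici_of_exponent_nonneg hs
  have hf_nonneg (x : ℝ) (hx : 0 ≤ x) : 0 ≤ x ^ s := Real.rpow_nonneg hx s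
  have hg := antitoneOn_exp_neg_div_rpow hΦ.le hp.le
  have hg_nonneg (x : ℝ) (_ : 0 ≤ x) : 0 ≤ Real.exp (-(x / Φ) ^ (1 / κ)) := Real.exp_nonneg _
  have hfg := integrableOn_rpow_mul_exp_neg_div_rpow hΦ hp hs'
  have summable := summable_mul_add_one_of_integrableOn_Ioi hf hf_nonneg hg hg_nonneg hfg
  have tsum_le := tsum_mul_add_one_le_integral_Ioi hf hf_nonneg hg hg_nonneg hfg
  rw [integral_rpow_mul_exp_neg_div_rpow hΦ hp hs', one_div_one_div, div_div_eq_mul_div, div_one,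
    mul_comm (s + 1)] at tsum_le
  exact ⟨summable, tsum_le⟩

/-- Lemma 1 (iv) of the paper.
For every `s : ℕ` and positive reals `Φ, κ`, the series
`∑_{x=1}^∞ (x-1)^s exp(-(x/Φ)^{1/κ})` (reindexed via `x = n + 1` as a series
over `n : ℕ`) converges and is bounded by `Φ^{s+1} κ Γ(κ(s+1))`. -/
theorem stmt_3 (s : ℕ) (Φ κ : ℝ) (hΦ : 0 < Φ) (hκ : 0 < κ) :
    Summable (fun n : ℕ => (n : ℝ) ^ s * Real.exp (-(((n : ℝ) + 1) / Φ) ^ (1 / κ))) ∧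
      ∑' n : ℕ, (n : ℝ) ^ s * Real.exp (-(((n : ℝ) + 1) / Φ) ^ (1 / κ)) ≤
        Φ ^ (s + 1) * κ * Real.Gamma (κ * ((s : ℝ) + 1)) := by
  exact_mod_cast stmt_3_general s Φ κ s.cast_nonneg hΦ hκ
end

section
/- Let (p_n)_{n∈ℕ} be a sequence of nonnegative real numbers and let A ≥ 0, B > 0 and κ > 0 be reals. Assume that for every integer s ≥ 1 the series ∑_{n=0}^∞ n^s·p_n converges and satisfies ∑_{n=0}^∞ n^s·p_n ≤ e^{−1}·((A + s^κ·B)/e)^s. Then for every natural number k and every real x with x ≥ A + (k+1)^κ·B, one has ∑_{n∈ℕ, n ≥ x} n^k·p_n ≤ x^k · exp(−((x−A)/B)^{1/κ}). -/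
/-!
Markov's inequality with exponent `s ≥ k` bounds the tail of the `k`-th moment beyond `x` by
`x ^ (k - s)` times the full `s`-th moment. Take `s = ⌊y⌋` with `y = ((x - A) / B) ^ (1 / κ)`,
the largest natural number for which the base `A + s ^ κ * B` of the moment bound is at most `x`.
The powers of `x` then combine to `x ^ k` and leave `exp (-(s + 1))`: the prefactor `e⁻¹` is
exactly what pays for rounding `y` down to `s`.
-/

theorem pow_mul_pow_le_pow_mul_pow {R : Type*} [CommSemiring R] [PartialOrder R]
    [IsOrderedRing R] {x t : R} {k s : ℕ} (hx : 0 ≤ x) (hxt : x ≤ t) (hks : k ≤ s) :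
    x ^ s * t ^ k ≤ x ^ k * t ^ s := by
  obtain ⟨m, rfl⟩ := Nat.exists_eq_add_of_le hks
  have ht : 0 ≤ t := hx.trans hxt
  calc x ^ (k + m) * t ^ k = x ^ k * t ^ k * x ^ m := by ring
    _ ≤ x ^ k * t ^ k * t ^ m := by gcongr
    _ = x ^ k * t ^ (k + m) := by ring

section Markov

variable {ι : Type*} {f w : ι → ℝ} {x : ℝ} {k s : ℕ}

theorem pow_mul_tail_term_le (hw : ∀ i, 0 ≤ w i) (hx : 0 ≤ x) (hks : k ≤ s)
    (i : {i // x ≤ f i}) :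
    x ^ s * (f i ^ k * w i) ≤ x ^ k * (f i ^ s * w i) := by
  simpa only [mul_assoc] using
    mul_le_mul_of_nonneg_right (pow_mul_pow_le_pow_mul_pow hx i.2 hks) (hw i)

theorem summable_tail_pow_mul (hw : ∀ i, 0 ≤ w i) (hx : 0 < x) (hks : k ≤ s)
    (hsum : Summable fun i => f i ^ s * w i) :
    Summable fun i : {i // x ≤ f i} => f i ^ k * w i := by
  have hmaj : Summable fun i : {i // x ≤ f i} => x ^ k * (f i ^ s * w i) :=
    (hsum.subtype {i | x ≤ f i}).mul_left (x ^ k)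
  refine (summable_mul_left_iff (pow_pos hx s).ne').1 (hmaj.of_nonneg_of_le (fun i => ?_)
    (pow_mul_tail_term_le hw hx.le hks))
  have hfi : 0 ≤ f i := hx.le.trans i.2
  have hwi : 0 ≤ w i := hw i
  positivity

theorem pow_mul_tsum_tail_le (hw : ∀ i, 0 ≤ w i) (hf : ∀ i, 0 ≤ f i) (hx : 0 < x)
    (hks : k ≤ s) (hsum : Summable fun i => f i ^ s * w i) :
    x ^ s * ∑' i : {i // x ≤ f i}, f i ^ k * w i ≤ x ^ k * ∑' i, f i ^ s * w i :=
  have htail : Summable fun i : {i // x ≤ f i} => f i ^ s * w i :=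
    hsum.subtype {i | x ≤ f i}
  calc x ^ s * ∑' i : {i // x ≤ f i}, f i ^ k * w i
      = ∑' i : {i // x ≤ f i}, x ^ s * (f i ^ k * w i) := tsum_mul_left.symm
    _ ≤ ∑' i : {i // x ≤ f i}, x ^ k * (f i ^ s * w i) :=
        ((summable_tail_pow_mul hw hx hks hsum).mul_left _).tsum_le_tsum
          (pow_mul_tail_term_le hw hx.le hks) (htail.mul_left _)
    _ = x ^ k * ∑' i : {i // x ≤ f i}, f i ^ s * w i := tsum_mul_left
    _ ≤ x ^ k * ∑' i, f i ^ s * w i := by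
        gcongr
        exact hsum.tsum_subtype_le _ {i | x ≤ f i}
          fun i => mul_nonneg (pow_nonneg (hf i) s) (hw i)

end Markov

section Exponent

variable {A B κ x : ℝ}

theorem add_rpow_mul_le_iff {t : ℝ} (hB : 0 < B) (hκ : 0 < κ) (hAx : A ≤ x) (ht : 0 ≤ t) :
    A + t ^ κ * B ≤ x ↔ t ≤ ((x - A) / B) ^ (1 / κ) := by
  rw [one_div, Real.le_rpow_inv_iff_of_pos ht (div_nonneg (sub_nonneg.2 hAx) hB.le) hκ,
    le_div_iff₀ hB, le_sub_iff_add_le']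

theorem inv_exp_one_mul_div_exp_one_pow (b : ℝ) (s : ℕ) :
    (Real.exp 1)⁻¹ * (b / Real.exp 1) ^ s = b ^ s * Real.exp (-(s + 1)) := by
  rw [div_pow, neg_add, Real.exp_add, Real.exp_neg, Real.exp_neg, Real.exp_one_pow]
  ring

theorem inv_exp_one_mul_div_pow_floor_le {b y : ℝ} (hb : 0 ≤ b) (hbx : b ≤ x) :
    (Real.exp 1)⁻¹ * (b / Real.exp 1) ^ ⌊y⌋₊ ≤ x ^ ⌊y⌋₊ * Real.exp (-y) := by
  have hx : 0 ≤ x := hb.trans hbx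
  have hy : y ≤ ⌊y⌋₊ + 1 := (Nat.lt_floor_add_one y).le
  rw [inv_exp_one_mul_div_exp_one_pow]
  gcongr

end Exponent

theorem stmt_5_general {ι : Type*} {f w : ι → ℝ} (hf : ∀ i, 0 ≤ f i) (hw : ∀ i, 0 ≤ w i)
    {A B κ : ℝ} (hA : 0 ≤ A) (hB : 0 < B) (hκ : 0 < κ)
    (hmom : ∀ s : ℕ, 1 ≤ s →
      Summable (fun i => f i ^ s * w i) ∧
        ∑' i, f i ^ s * w i ≤ (Real.exp 1)⁻¹ * ((A + (s : ℝ) ^ κ * B) / Real.exp 1) ^ s)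
    {k : ℕ} {x : ℝ} (hx : A + ((max k 1 : ℕ) : ℝ) ^ κ * B ≤ x) :
    Summable (fun i : {i // x ≤ f i} => f i ^ k * w i) ∧
      ∑' i : {i // x ≤ f i}, f i ^ k * w i ≤
        x ^ k * Real.exp (-((x - A) / B) ^ (1 / κ)) := by
  have hAx : A < x := (lt_add_of_pos_right A (by positivity)).trans_le hx
  have hx0 : 0 < x := hA.trans_lt hAx
  set y : ℝ := ((x - A) / B) ^ (1 / κ)
  have hmax : max k 1 ≤ ⌊y⌋₊ :=
    Nat.le_floor ((add_rpow_mul_le_iff hB hκ hAx.le (Nat.cast_nonneg _)).1 hx)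
  have hks : k ≤ ⌊y⌋₊ := (le_max_left k 1).trans hmax
  have hy : 0 ≤ y := Real.rpow_nonneg (div_nonneg (sub_nonneg.2 hAx.le) hB.le) _
  have hbase : A + (⌊y⌋₊ : ℝ) ^ κ * B ≤ x :=
    (add_rpow_mul_le_iff hB hκ hAx.le (Nat.cast_nonneg _)).2 (Nat.floor_le hy)
  obtain ⟨hsum, hle⟩ := hmom ⌊y⌋₊ ((le_max_right k 1).trans hmax)
  refine ⟨summable_tail_pow_mul hw hx0 hks hsum, le_of_mul_le_mul_left ?_ (pow_pos hx0 ⌊y⌋₊)⟩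
  calc x ^ ⌊y⌋₊ * ∑' i : {i // x ≤ f i}, f i ^ k * w i
      ≤ x ^ k * ∑' i, f i ^ ⌊y⌋₊ * w i := pow_mul_tsum_tail_le hw hf hx0 hks hsum
    _ ≤ x ^ k * (x ^ ⌊y⌋₊ * Real.exp (-y)) := by
        gcongr
        exact hle.trans (inv_exp_one_mul_div_pow_floor_le (by positivity) hbase)
    _ = x ^ ⌊y⌋₊ * (x ^ k * Real.exp (-y)) := mul_left_comm _ _ _

/-- Lemma 2 of the paper: tail bounds from moment bounds.
Let `(p_n)` be nonnegative reals, `A ≥ 0`, `B > 0`, `κ > 0`, and assume that for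
every integer `s ≥ 1` the series `∑ n^s p_n` converges with
`∑_{n} n^s p_n ≤ e^{-1} ((A + s^κ B)/e)^s`.  Then for every `k : ℕ` and every
real `x ≥ A + (k+1)^κ B`, the tail sum satisfies
`∑_{n ≥ x} n^k p_n ≤ x^k exp(-((x-A)/B)^{1/κ})`. -/
theorem stmt_5 (p : ℕ → ℝ) (hp : ∀ n, 0 ≤ p n) (A B κ : ℝ)
    (hA : 0 ≤ A) (hB : 0 < B) (hκ : 0 < κ)
    (hmom : ∀ s : ℕ, 1 ≤ s →
      Summable (fun n : ℕ => (n : ℝ) ^ s * p n) ∧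
        ∑' n : ℕ, (n : ℝ) ^ s * p n ≤
          (Real.exp 1)⁻¹ * ((A + (s : ℝ) ^ κ * B) / Real.exp 1) ^ s)
    (k : ℕ) (x : ℝ) (hx : A + ((k : ℝ) + 1) ^ κ * B ≤ x) :
    Summable (fun n : {n : ℕ // x ≤ (n : ℝ)} => (n.1 : ℝ) ^ k * p n.1) ∧
      ∑' n : {n : ℕ // x ≤ (n : ℝ)}, (n.1 : ℝ) ^ k * p n.1 ≤
        x ^ k * Real.exp (-((x - A) / B) ^ (1 / κ)) := by
  have hmax : ((max k 1 : ℕ) : ℝ) ≤ k + 1 := by exact_mod_cast (by lia : max k 1 ≤ k + 1)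
  exact stmt_5_general (fun n => n.cast_nonneg) hp hA hB hκ hmom (le_trans (by gcongr) hx)
end

section
/- In the setting of the shell-summation lemmas, there exists p ∈ {1,…,p̃} such that Ñ_p + N_{1:p} ≤ (1 + ᾱ·(1 + 1/(ᾱ + χ))^{−(p̃−1)}) · N_{1:p̃}. -/
/-!
Suppose that `c + ∑_{j > p} N j < Ñ p` for every shell `p`, where `c ≥ 0`. A column of the kernel
sums to at most `a`, and its part beyond a shell `s ≥ j` to at most `χ * K s j`, so
`∑_{p > s} Ñ p ≤ a * ∑_{j > s} N j + χ * Ñ s ≤ (a + χ) * Ñ s`. Hence the tail sums of `Ñ`, which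
start above `c` at the last shell, grow at least by the factor `1 + 1 / (a + χ)` with each further
shell, whereas the full sum of `Ñ` is at most `a * ∑ N`. The value of `c` in the theorem is the one
at which these two bounds meet.
-/

open Finset

section KernelSum

variable {ι : Type*} {K : ι → ι → ℝ} {N : ι → ℝ} {t : Finset ι} {a χ : ℝ}

/-- The shell number `Ñ p` obtained from `N` through the kernel `K` on the finite set `t` of shells;
the kernel of the paper is `K p j = α |p - j|`. -/
def kernelSum (K : ι → ι → ℝ) (N : ι → ℝ) (t : Finset ι) (p : ι) : ℝ :=
  ∑ j ∈ t, K p j * N j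

theorem sum_kernelSum_le_sum_mul {u : Finset ι} {b : ι → ℝ} (hN : ∀ j ∈ t, 0 ≤ N j)
    (hb : ∀ j ∈ t, ∑ p ∈ u, K p j ≤ b j) :
    ∑ p ∈ u, kernelSum K N t p ≤ ∑ j ∈ t, b j * N j := by
  calc ∑ p ∈ u, kernelSum K N t p
      = ∑ j ∈ t, (∑ p ∈ u, K p j) * N j := by
        simp only [kernelSum, sum_mul]
        exact sum_comm
    _ ≤ ∑ j ∈ t, b j * N j :=
        sum_le_sum fun j hj => mul_le_mul_of_nonneg_right (hb j hj) (hN j hj)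

variable [LinearOrder ι]

theorem sum_filter_lt_kernelSum_le {s : ι} (hs : s ∈ t) (hN : ∀ j ∈ t, 0 ≤ N j)
    (hK : ∀ p ∈ t, ∀ j ∈ t, 0 ≤ K p j) (hχ : 0 ≤ χ) (hcol : ∀ j ∈ t, ∑ p ∈ t, K p j ≤ a)
    (htail : ∀ j ∈ t, j ≤ s → ∑ p ∈ t with s < p, K p j ≤ χ * K s j) :
    ∑ p ∈ t with s < p, kernelSum K N t p ≤
      a * ∑ j ∈ t with s < j, N j + χ * kernelSum K N t s := by
  have column_le : ∀ j ∈ t,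
      ∑ p ∈ t with s < p, K p j ≤ (if s < j then a else 0) + χ * K s j := by
    intro j hj
    split_ifs with hsj
    · calc ∑ p ∈ t with s < p, K p j
          ≤ ∑ p ∈ t, K p j :=
            sum_le_sum_of_subset_of_nonneg (filter_subset _ _) fun p hp _ => hK p hp j hj
        _ ≤ a := hcol j hj
        _ ≤ a + χ * K s j := le_add_of_nonneg_right (mul_nonneg hχ (hK s hs j hj))
    · simpa only [zero_add] using htail j hj (not_lt.mp hsj)
  calc ∑ p ∈ t with s < p, kernelSum K N t p
      ≤ ∑ j ∈ t, ((if s < j then a else 0) + χ * K s j) * N j :=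
        sum_kernelSum_le_sum_mul hN column_le
    _ = a * ∑ j ∈ t with s < j, N j + χ * kernelSum K N t s := by
        simp only [kernelSum, add_mul, ite_mul, zero_mul, sum_add_distrib, sum_filter, mul_sum,
          mul_ite, mul_zero, mul_assoc]

/-- A discrete Grönwall inequality, run downwards from the largest element of `t`. -/
theorem pow_card_sub_one_mul_lt_sum {M : ι → ℝ} {κ c : ℝ} (ht : t.Nonempty) (hκ : 0 < κ)
    (htail : ∀ s ∈ t, ∑ p ∈ t with s < p, M p ≤ κ * M s) (hc : ∀ s ∈ t, c < M s) :
    (1 + 1 / κ) ^ (#t - 1) * c < ∑ p ∈ t, M p := by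
  induction t using Finset.induction_on_min with
  | empty => exact absurd ht not_nonempty_empty
  | insert m t hm ih =>
    have m_notMem : m ∉ t := fun hmt => (hm m hmt).false
    have sum_t_le : ∑ p ∈ t, M p ≤ κ * M m := by
      simpa [filter_insert, filter_true_of_mem hm] using htail m (mem_insert_self m t)
    rcases t.eq_empty_or_nonempty with rfl | t_nonempty
    · simpa using hc m
    have lt_sum_t : (1 + 1 / κ) ^ (#t - 1) * c < ∑ p ∈ t, M p := by
      refine ih t_nonempty (fun s hs => ?_) fun s hs => hc s (mem_insert_of_mem hs)
      simpa only [filter_insert, (hm s hs).not_gt, if_false]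
        using htail s (mem_insert_of_mem hs)
    calc (1 + 1 / κ) ^ (#(insert m t) - 1) * c
        = (1 + 1 / κ) * ((1 + 1 / κ) ^ (#t - 1) * c) := by
          rw [card_insert_of_notMem m_notMem, Nat.add_sub_cancel, ← mul_assoc,
            mul_pow_sub_one t_nonempty.card_ne_zero]
      _ < (1 + 1 / κ) * ∑ p ∈ t, M p := by gcongr
      _ = (∑ p ∈ t, M p) / κ + ∑ p ∈ t, M p := by ring
      _ ≤ M m + ∑ p ∈ t, M p := by
          gcongr
          exact (div_le_iff₀' hκ).mpr sum_t_le
      _ = ∑ p ∈ insert m t, M p := (sum_insert m_notMem).symm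

theorem stmt_7_general (ht : t.Nonempty) (hN : ∀ j ∈ t, 0 ≤ N j)
    (hK : ∀ p ∈ t, ∀ j ∈ t, 0 ≤ K p j) (ha : 0 < a) (hχ : 0 ≤ χ)
    (hcol : ∀ j ∈ t, ∑ p ∈ t, K p j ≤ a)
    (htail : ∀ s ∈ t, ∀ j ∈ t, j ≤ s → ∑ p ∈ t with s < p, K p j ≤ χ * K s j) :
    ∃ p ∈ t, kernelSum K N t p + ∑ j ∈ t with j ≤ p, N j ≤
      (1 + a * (1 + 1 / (a + χ)) ^ (-((#t : ℤ) - 1))) * ∑ j ∈ t, N j := by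
  by_contra! hcon
  set r := 1 + 1 / (a + χ)
  set c := a * r ^ (-((#t : ℤ) - 1)) * ∑ j ∈ t, N j with hc
  have r_pos : 0 < r := by positivity
  have c_nonneg : 0 ≤ c := by have := sum_nonneg hN; positivity
  have kernelSum_large : ∀ p ∈ t, ∑ j ∈ t with p < j, N j + c < kernelSum K N t p := by
    intro p hp
    have split_sum := sum_filter_add_sum_filter_not t (· ≤ p) N
    simp only [not_le] at split_sum
    linarith [hcon p hp]
  have growth : r ^ (#t - 1) * c < ∑ p ∈ t, kernelSum K N t p := by
    refine pow_card_sub_one_mul_lt_sum ht (by positivity) (fun s hs => ?_) fun s hs => ?_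
    · calc ∑ p ∈ t with s < p, kernelSum K N t p
          ≤ a * ∑ j ∈ t with s < j, N j + χ * kernelSum K N t s :=
            sum_filter_lt_kernelSum_le hs hN hK hχ hcol (htail s hs)
        _ ≤ a * kernelSum K N t s + χ * kernelSum K N t s := by
            gcongr
            linarith [kernelSum_large s hs]
        _ = (a + χ) * kernelSum K N t s := by ring
    · have tail_nonneg : 0 ≤ ∑ j ∈ t with s < j, N j :=
        sum_nonneg fun j hj => hN j (mem_of_mem_filter j hj)
      linarith [kernelSum_large s hs]
  have total : ∑ p ∈ t, kernelSum K N t p ≤ a * ∑ j ∈ t, N j := by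
    simpa only [mul_sum] using sum_kernelSum_le_sum_mul hN hcol
  have pow_mul_c : r ^ (#t - 1) * c = a * ∑ j ∈ t, N j := by
    have exponent : (#t : ℤ) - 1 = (#t - 1 : ℕ) := (Nat.cast_pred ht.card_pos).symm
    rw [hc, exponent, zpow_neg, zpow_natCast]
    field_simp
  linarith

end KernelSum

theorem filter_le_Icc_of_le {ι : Type*} [Preorder ι] [LocallyFiniteOrder ι]
    [DecidableLE ι] {a b c : ι} (hcb : c ≤ b) : {x ∈ Icc a b | x ≤ c} = Icc a c := by
  ext x
  simp only [mem_filter, mem_Icc]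
  exact ⟨fun h => ⟨h.1.1, h.2⟩, fun h => ⟨⟨h.1, h.2.trans hcb⟩, h.2⟩⟩

section Toeplitz

variable {α : ℕ → ℝ}

theorem sum_apply_dist_le (hα : ∀ j, 0 ≤ α j) (hsum : Summable α) (t : Finset ℕ) (j : ℕ) :
    ∑ p ∈ t, α (Nat.dist p j) ≤ α 0 + 2 * ∑' q, α (q + 1) := by
  have hsum_succ : Summable fun q => α (q + 1) := (summable_nat_add_iff 1).mpr hsum
  have dist_add (q : ℕ) : Nat.dist (q + j) j = q := by simp [Nat.dist]
  have hsum_dist : Summable fun p => α (Nat.dist p j) :=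
    (summable_nat_add_iff j).mp (by simpa only [dist_add] using hsum)
  have sum_below : ∑ p ∈ range j, α (Nat.dist p j) = ∑ q ∈ range j, α (q + 1) := by
    rw [← sum_range_reflect]
    refine sum_congr rfl fun q hq => congrArg α ?_
    have := mem_range.mp hq
    unfold Nat.dist
    omega
  calc ∑ p ∈ t, α (Nat.dist p j)
      ≤ ∑' p, α (Nat.dist p j) := hsum_dist.sum_le_tsum t fun _ _ => hα _
    _ = ∑ q ∈ range j, α (q + 1) + ∑' q, α q := by
        rw [← hsum_dist.sum_add_tsum_nat_add j, sum_below]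
        simp only [dist_add]
    _ ≤ ∑' q, α (q + 1) + (α 0 + ∑' q, α (q + 1)) :=
        add_le_add (hsum_succ.sum_le_tsum _ fun _ _ => hα _) hsum.tsum_eq_zero_add.le
    _ = α 0 + 2 * ∑' q, α (q + 1) := by ring

theorem sum_filter_lt_apply_dist_le (hα : ∀ j, 0 ≤ α j) (hsum : Summable α) (t : Finset ℕ)
    {s j : ℕ} (hjs : j ≤ s) :
    ∑ p ∈ t with s < p, α (Nat.dist p j) ≤ ∑' q, α (q + 1 + Nat.dist s j) := by
  have hsum_shift : Summable fun q => α (q + 1 + Nat.dist s j) := by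
    simpa only [add_assoc] using (summable_nat_add_iff (1 + Nat.dist s j)).mpr hsum
  have shift_injOn : Set.InjOn (· - (s + 1)) (t.filter (s < ·) : Set ℕ) := by
    intro p hp q hq hpq
    simp only [coe_filter, Set.mem_ofPred_eq] at hp hq hpq
    omega
  calc ∑ p ∈ t with s < p, α (Nat.dist p j)
      = ∑ p ∈ t with s < p, α (p - (s + 1) + 1 + Nat.dist s j) := by
        refine sum_congr rfl fun p hp => congrArg α ?_
        have := (mem_filter.mp hp).2
        unfold Nat.dist
        omega
    _ = ∑ q ∈ (t.filter (s < ·)).image (· - (s + 1)), α (q + 1 + Nat.dist s j) :=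
        (sum_image (f := fun q => α (q + 1 + Nat.dist s j)) shift_injOn).symm
    _ ≤ ∑' q, α (q + 1 + Nat.dist s j) := hsum_shift.sum_le_tsum _ fun _ _ => hα _

end Toeplitz

/-- Lemma 8 of the paper: minimization of shell boson numbers.
Setting: `ptil ≥ 1`, nonnegative reals `N 1, …, N ptil`, a summable sequence of
strictly positive reals `α`, `abar = α 0 + 2 ∑_{j≥1} α j`, and `χ ≥ 0` with
`∑_{p≥1} α (p+j) ≤ χ α j` for all `j`.  With
`Ñ_p = ∑_{j=1}^{ptil} α_{|p-j|} N_j` and `N_{1:p} = ∑_{j=1}^p N_j`, there exists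
`p ∈ {1,…,ptil}` with
`Ñ_p + N_{1:p} ≤ (1 + abar (1 + 1/(abar+χ))^{-(ptil-1)}) N_{1:ptil}`. -/
theorem stmt_7 (ptil : ℕ) (hptil : 1 ≤ ptil) (N : ℕ → ℝ) (hN : ∀ j, 0 ≤ N j)
    (α : ℕ → ℝ) (hα : ∀ j, 0 < α j) (hsum : Summable α)
    (abar χ : ℝ) (habar : abar = α 0 + 2 * ∑' j : ℕ, α (j + 1))
    (hχ : 0 ≤ χ) (hχα : ∀ j : ℕ, ∑' q : ℕ, α (q + 1 + j) ≤ χ * α j) :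
    ∃ p ∈ Finset.Icc 1 ptil,
      (∑ j ∈ Finset.Icc 1 ptil, α (Nat.dist p j) * N j) + ∑ j ∈ Finset.Icc 1 p, N j ≤
        (1 + abar * (1 + 1 / (abar + χ)) ^ (-((ptil : ℤ) - 1))) *
          ∑ j ∈ Finset.Icc 1 ptil, N j := by
  have hα_nonneg (j : ℕ) : 0 ≤ α j := (hα j).le
  have column_le (t : Finset ℕ) (j : ℕ) : ∑ p ∈ t, α (Nat.dist p j) ≤ abar :=
    habar ▸ sum_apply_dist_le hα_nonneg hsum t j
  have abar_pos : 0 < abar := (hα 0).trans_le (by simpa using column_le {0} 0)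
  obtain ⟨p, hp, hle⟩ := stmt_7_general (t := Icc 1 ptil) (K := fun p j => α (Nat.dist p j))
    (nonempty_Icc.mpr hptil) (fun j _ => hN j) (fun _ _ _ _ => hα_nonneg _) abar_pos hχ
    (fun j _ => column_le _ j)
    (fun _ _ _ _ hjs => (sum_filter_lt_apply_dist_le hα_nonneg hsum _ hjs).trans (hχα _))
  rw [filter_le_Icc_of_le (mem_Icc.mp hp).2, Nat.card_Icc, Nat.add_sub_cancel] at hle
  exact ⟨p, hp, hle⟩
end

section
/- In the setting of the shell-summation lemmas, there exists p ∈ {1,…,p̃} such that N_{1:p} − Ñ_p ≥ −ᾱ·(1 + 1/(ᾱ + χ))^{−(p̃−1)} · N_{1:p̃}. -/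
/-!
Only two properties of the kernel `A_{p,j} = α_{|p-j|}` matter: its column sums are at most `a = ᾱ`,
and for `k < j` the part of column `j` in rows `1, …, k` sums to at most `χ A_{k+1,j}`.

Suppose `N_{1:p} + c < Ñ_p` for every `p`, with `c = a (1 + 1 / (a + χ))^{-(n-1)} N_{1:n}`, and let
`U_k = ∑_{p ≤ k} Ñ_p`. Exchange the order of summation in `U_k`: a shell `j ≤ k` contributes at most
`a N_j` by the column bound, a shell `j > k` at most `χ A_{k+1,j} N_j` by the tail bound. Hence
`U_k ≤ a N_{1:k} + χ Ñ_{k+1} ≤ (a + χ) (U_{k+1} - U_k)`, so `U` grows geometrically with ratio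
`1 + 1 / (a + χ)` from `U_1 = Ñ_1 > c`, and overtakes the a priori bound `U_n ≤ a N_{1:n}`.
-/

open Finset

section Kernel

/-- The weighted shell sums `Ñ_p = ∑_{j=1}^n A_{p,j} N_j` of the populations `N` of the shells
`1, …, n`, for an arbitrary kernel `A`; the shell-summation setting is `A_{p,j} = α_{|p-j|}`. -/
def shellSum (A : ℕ → ℕ → ℝ) (N : ℕ → ℝ) (n p : ℕ) : ℝ :=
  ∑ j ∈ Icc 1 n, A p j * N j

variable {A : ℕ → ℕ → ℝ} {N : ℕ → ℝ} {n : ℕ} {a χ : ℝ}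

theorem sum_shellSum (s : Finset ℕ) :
    ∑ p ∈ s, shellSum A N n p = ∑ j ∈ Icc 1 n, (∑ p ∈ s, A p j) * N j := by
  simp only [shellSum, sum_mul]
  exact sum_comm

theorem sum_shellSum_le {s : Finset ℕ} (hN : ∀ j ∈ Icc 1 n, 0 ≤ N j)
    (hcol : ∀ j ∈ Icc 1 n, ∑ p ∈ s, A p j ≤ a) :
    ∑ p ∈ s, shellSum A N n p ≤ a * ∑ j ∈ Icc 1 n, N j := by
  rw [sum_shellSum, mul_sum]
  exact sum_le_sum fun j hj => mul_le_mul_of_nonneg_right (hcol j hj) (hN j hj)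

theorem sum_Icc_shellSum_le_add (hN : ∀ j ∈ Icc 1 n, 0 ≤ N j) (hA : ∀ p j, 0 ≤ A p j) (hχ : 0 ≤ χ)
    (hcol : ∀ j ∈ Icc 1 n, ∑ p ∈ Icc 1 n, A p j ≤ a)
    (htail : ∀ j ∈ Icc 1 n, ∀ k < j, ∑ p ∈ Icc 1 k, A p j ≤ χ * A (k + 1) j)
    {k : ℕ} (hk : k ≤ n) :
    ∑ p ∈ Icc 1 k, shellSum A N n p ≤ a * ∑ j ∈ Icc 1 k, N j + χ * shellSum A N n (k + 1) := by
  have restrict : ∑ j ∈ Icc 1 k, N j = ∑ j ∈ Icc 1 n, if j ≤ k then N j else 0 := by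
    rw [← sum_filter]
    congr 1
    ext j
    simp only [mem_filter, mem_Icc]
    omega
  rw [sum_shellSum, restrict, shellSum, mul_sum, mul_sum, ← sum_add_distrib]
  refine sum_le_sum fun j hj => ?_
  split_ifs with hjk
  · have near : ∑ p ∈ Icc 1 k, A p j ≤ a :=
      (sum_le_sum_of_subset_of_nonneg (Icc_subset_Icc_right hk) fun p _ _ => hA p j).trans
        (hcol j hj)
    have := mul_le_mul_of_nonneg_right near (hN j hj)
    have := mul_nonneg hχ (mul_nonneg (hA (k + 1) j) (hN j hj))
    linarith
  · have far := mul_le_mul_of_nonneg_right (htail j hj k (not_le.mp hjk)) (hN j hj)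
    linarith

theorem one_add_mul_sum_Icc_shellSum_le (hN : ∀ j ∈ Icc 1 n, 0 ≤ N j) (hA : ∀ p j, 0 ≤ A p j)
    (ha : 0 < a) (hχ : 0 ≤ χ) (hcol : ∀ j ∈ Icc 1 n, ∑ p ∈ Icc 1 n, A p j ≤ a)
    (htail : ∀ j ∈ Icc 1 n, ∀ k < j, ∑ p ∈ Icc 1 k, A p j ≤ χ * A (k + 1) j)
    {k : ℕ} (hk : k < n) (hle : ∑ j ∈ Icc 1 (k + 1), N j ≤ shellSum A N n (k + 1)) :
    (1 + 1 / (a + χ)) * ∑ p ∈ Icc 1 k, shellSum A N n p ≤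
      ∑ p ∈ Icc 1 (k + 1), shellSum A N n p := by
  have hNk : ∑ j ∈ Icc 1 k, N j ≤ shellSum A N n (k + 1) := by
    rw [sum_Icc_succ_top (by omega)] at hle
    linarith [hN (k + 1) (mem_Icc.mpr ⟨by omega, hk⟩)]
  have increment :
      (∑ p ∈ Icc 1 k, shellSum A N n p) / (a + χ) ≤ shellSum A N n (k + 1) := by
    rw [div_le_iff₀' (by positivity)]
    calc ∑ p ∈ Icc 1 k, shellSum A N n p
        ≤ a * ∑ j ∈ Icc 1 k, N j + χ * shellSum A N n (k + 1) :=
          sum_Icc_shellSum_le_add hN hA hχ hcol htail hk.le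
      _ ≤ a * shellSum A N n (k + 1) + χ * shellSum A N n (k + 1) := by gcongr
      _ = (a + χ) * shellSum A N n (k + 1) := by ring
  rw [sum_Icc_succ_top (by omega), one_add_mul, one_div_mul_eq_div]
  gcongr

theorem pow_mul_shellSum_one_le (hn : 1 ≤ n) (hN : ∀ j ∈ Icc 1 n, 0 ≤ N j)
    (hA : ∀ p j, 0 ≤ A p j) (ha : 0 < a) (hχ : 0 ≤ χ)
    (hcol : ∀ j ∈ Icc 1 n, ∑ p ∈ Icc 1 n, A p j ≤ a)
    (htail : ∀ j ∈ Icc 1 n, ∀ k < j, ∑ p ∈ Icc 1 k, A p j ≤ χ * A (k + 1) j)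
    (hle : ∀ p ∈ Icc 1 n, ∑ j ∈ Icc 1 p, N j ≤ shellSum A N n p) :
    (1 + 1 / (a + χ)) ^ (n - 1) * shellSum A N n 1 ≤ a * ∑ j ∈ Icc 1 n, N j := by
  have growth := geom_le (u := fun k => ∑ p ∈ Icc 1 (k + 1), shellSum A N n p)
    (c := 1 + 1 / (a + χ)) (by positivity) (n - 1) fun k hk =>
      one_add_mul_sum_Icc_shellSum_le hN hA ha hχ hcol htail (by omega)
        (hle _ (mem_Icc.mpr ⟨by omega, by omega⟩))
  simp only [zero_add, Icc_self, sum_singleton, Nat.sub_add_cancel hn] at growth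
  exact growth.trans (sum_shellSum_le hN hcol)

theorem stmt_8_general (hn : 1 ≤ n) (hN : ∀ j ∈ Icc 1 n, 0 ≤ N j) (hA : ∀ p j, 0 ≤ A p j)
    (ha : 0 < a) (hχ : 0 ≤ χ) (hcol : ∀ j ∈ Icc 1 n, ∑ p ∈ Icc 1 n, A p j ≤ a)
    (htail : ∀ j ∈ Icc 1 n, ∀ k < j, ∑ p ∈ Icc 1 k, A p j ≤ χ * A (k + 1) j) :
    ∃ p ∈ Icc 1 n, (∑ j ∈ Icc 1 p, N j) - shellSum A N n p ≥
      -(a * (1 + 1 / (a + χ)) ^ (-((n : ℤ) - 1)) * ∑ j ∈ Icc 1 n, N j) := by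
  set r : ℝ := 1 + 1 / (a + χ)
  set c : ℝ := a * r ^ (-((n : ℤ) - 1)) * ∑ j ∈ Icc 1 n, N j with hc
  have hr_pos : 0 < r := by positivity
  have hc_nonneg : 0 ≤ c := mul_nonneg (by positivity) (sum_nonneg hN)
  have pow_mul_c : r ^ (n - 1) * c = a * ∑ j ∈ Icc 1 n, N j := by
    rw [hc, zpow_neg, ← Nat.cast_pred hn, zpow_natCast]
    field_simp
  by_contra! hcon
  have c_lt : c < shellSum A N n 1 := by
    have := hcon 1 (left_mem_Icc.mpr hn)
    rw [Icc_self, sum_singleton] at this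
    linarith [hN 1 (left_mem_Icc.mpr hn)]
  have upper : r ^ (n - 1) * shellSum A N n 1 ≤ r ^ (n - 1) * c :=
    (pow_mul_shellSum_one_le hn hN hA ha hχ hcol htail fun p hp => by
      linarith [hcon p hp]).trans_eq pow_mul_c.symm
  exact c_lt.not_ge (le_of_mul_le_mul_left upper (by positivity))

end Kernel

section Distance

theorem sum_comp_le_tsum_of_injOn {ι κ : Type*} {f : κ → ℝ} (hf : ∀ i, 0 ≤ f i)
    (hsum : Summable f) {s : Finset ι} {g : ι → κ} (hg : Set.InjOn g s) :
    ∑ i ∈ s, f (g i) ≤ ∑' k, f k := by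
  classical
  rw [← sum_image hg]
  exact hsum.sum_le_tsum _ fun k _ => hf k

variable {α : ℕ → ℝ}

theorem hasSum_natAbs (hsum : Summable α) :
    HasSum (fun z : ℤ => α z.natAbs) (α 0 + 2 * ∑' j : ℕ, α (j + 1)) := by
  have hshift : HasSum (fun j : ℕ => α (j + 1)) (∑' j : ℕ, α (j + 1)) :=
    ((summable_nat_add_iff 1).mpr hsum).hasSum
  have hnonneg : HasSum α (α 0 + ∑' j : ℕ, α (j + 1)) := hshift.zero_add
  rw [two_mul, ← add_assoc]
  refine HasSum.of_nat_of_neg_add_one hnonneg ?_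
  simpa only [← Int.natCast_succ, Int.natAbs_neg, Int.natAbs_natCast] using hshift

theorem sum_dist_le (hα : ∀ j, 0 ≤ α j) (hsum : Summable α) (s : Finset ℕ) (j : ℕ) :
    ∑ p ∈ s, α (Nat.dist p j) ≤ α 0 + 2 * ∑' j : ℕ, α (j + 1) := by
  have hdist : ∀ p, Nat.dist p j = ((p : ℤ) - j).natAbs := fun p => by
    unfold Nat.dist
    omega
  have hinj : Set.InjOn (fun p : ℕ => (p : ℤ) - j) s := fun p _ q _ hpq => by
    simpa using hpq
  simp only [hdist, ← (hasSum_natAbs hsum).tsum_eq]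
  exact sum_comp_le_tsum_of_injOn (fun z => hα z.natAbs) (hasSum_natAbs hsum).summable hinj

theorem sum_Icc_dist_le_tsum (hα : ∀ j, 0 ≤ α j) (hsum : Summable α) {k j : ℕ} (hkj : k < j) :
    ∑ p ∈ Icc 1 k, α (Nat.dist p j) ≤ ∑' q : ℕ, α (q + 1 + Nat.dist (k + 1) j) := by
  have hdist : ∀ p ∈ Icc 1 k, Nat.dist p j = k - p + 1 + Nat.dist (k + 1) j := fun p hp => by
    rw [mem_Icc] at hp
    unfold Nat.dist
    omega
  have hinj : Set.InjOn (fun p => k - p) (Icc 1 k) := fun p hp q hq hpq => by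
    simp only [coe_Icc, Set.mem_Icc] at hp hq hpq
    omega
  rw [sum_congr rfl fun p hp => congrArg α (hdist p hp)]
  refine sum_comp_le_tsum_of_injOn (f := fun q => α (q + 1 + Nat.dist (k + 1) j))
    (fun _ => hα _) ?_ hinj
  simpa only [add_assoc] using (summable_nat_add_iff (1 + Nat.dist (k + 1) j)).mpr hsum

end Distance

/-- Lemma 9 of the paper: maximization counterpart of Lemma 8.
In the shell-summation setting (see Statement 7), there exists
`p ∈ {1,…,ptil}` with
`N_{1:p} - Ñ_p ≥ -abar (1 + 1/(abar+χ))^{-(ptil-1)} N_{1:ptil}`. -/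
theorem stmt_8 (ptil : ℕ) (hptil : 1 ≤ ptil) (N : ℕ → ℝ) (hN : ∀ j, 0 ≤ N j)
    (α : ℕ → ℝ) (hα : ∀ j, 0 < α j) (hsum : Summable α)
    (abar χ : ℝ) (habar : abar = α 0 + 2 * ∑' j : ℕ, α (j + 1))
    (hχ : 0 ≤ χ) (hχα : ∀ j : ℕ, ∑' q : ℕ, α (q + 1 + j) ≤ χ * α j) :
    ∃ p ∈ Finset.Icc 1 ptil,
      (∑ j ∈ Finset.Icc 1 p, N j) - ∑ j ∈ Finset.Icc 1 ptil, α (Nat.dist p j) * N j ≥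
        -(abar * (1 + 1 / (abar + χ)) ^ (-((ptil : ℤ) - 1)) *
          ∑ j ∈ Finset.Icc 1 ptil, N j) := by
  have hα_nonneg : ∀ j, 0 ≤ α j := fun j => (hα j).le
  have htail_nonneg : 0 ≤ ∑' j : ℕ, α (j + 1) := tsum_nonneg fun _ => hα_nonneg _
  have habar_pos : 0 < abar := by linarith [hα 0]
  exact stmt_8_general (A := fun p j => α (Nat.dist p j)) hptil (fun j _ => hN j)
    (fun _ _ => hα_nonneg _) habar_pos hχ
    (fun j _ => habar ▸ sum_dist_le hα_nonneg hsum _ j)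
    fun j _ k hkj => (sum_Icc_dist_le_tsum hα_nonneg hsum hkj).trans (hχα _)
end

section
/- For all natural numbers p and s' with p ≤ s', and all real numbers c ≥ 0 and τ ≥ 0, the p-th iterated derivative of the function x ↦ x^{s'}·exp(c·s'·x), evaluated at τ, satisfies: (d/dx)^p [x^{s'}·exp(c·s'·x)] (τ) ≤ (s')^p · τ^{s'−p} · exp(c·s'·τ) · (1 + c·τ)^p. -/
/-!
By the Leibniz rule, the `p`-th derivative of `x ^ n * exp (a * x)` is a binomial sum whose `i`-th
term contains the falling factorial `n (n - 1) ⋯ (n - i + 1)`. Taking absolute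
values and replacing this factor by `n ^ i` turns the sum into the binomial expansion of
`|x| ^ (n - p) * exp (a * x) * (n + |a * x|) ^ p`. The rate `a = c * n` makes `n ^ p` factor out of
the last power.
-/

theorem iteratedDeriv_pow_mul_exp (n p : ℕ) (a x : ℝ) :
    iteratedDeriv p (fun y : ℝ => y ^ n * Real.exp (a * y)) x =
      ∑ i ∈ Finset.range (p + 1),
        p.choose i * (n.descFactorial i * x ^ (n - i)) * (a ^ (p - i) * Real.exp (a * x)) := by
  rw [iteratedDeriv_fun_mul (by fun_prop) (by fun_prop)]
  simp only [iteratedDeriv_pow, iteratedDeriv_exp_const_mul]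

theorem abs_iteratedDeriv_pow_mul_exp_le {n p : ℕ} (hpn : p ≤ n) (a x : ℝ) :
    |iteratedDeriv p (fun y : ℝ => y ^ n * Real.exp (a * y)) x| ≤
      |x| ^ (n - p) * Real.exp (a * x) * (n + |a * x|) ^ p := by
  rw [iteratedDeriv_pow_mul_exp, add_pow, Finset.mul_sum]
  refine (Finset.abs_sum_le_sum_abs _ _).trans (Finset.sum_le_sum fun i hi => ?_)
  have hip : i ≤ p := Finset.mem_range_succ_iff.mp hi
  have descFactorial_le : (n.descFactorial i : ℝ) ≤ (n : ℝ) ^ i :=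
    mod_cast Nat.descFactorial_le_pow n i
  have pow_split : |x| ^ (n - i) = |x| ^ (n - p) * |x| ^ (p - i) := by
    rw [← pow_add, Nat.sub_add_sub_cancel hpn hip]
  calc
    |p.choose i * (n.descFactorial i * x ^ (n - i)) * (a ^ (p - i) * Real.exp (a * x))|
      = p.choose i * (n.descFactorial i * |x| ^ (n - i)) *
          (|a| ^ (p - i) * Real.exp (a * x)) := by
        simp only [abs_mul, abs_pow, Nat.abs_cast, Real.abs_exp]
    _ ≤ p.choose i * ((n : ℝ) ^ i * |x| ^ (n - i)) * (|a| ^ (p - i) * Real.exp (a * x)) := by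
        gcongr
    _ = |x| ^ (n - p) * Real.exp (a * x) *
          ((n : ℝ) ^ i * |a * x| ^ (p - i) * p.choose i) := by
        rw [pow_split, abs_mul, mul_pow]
        ring

theorem stmt_15_general {p s' : ℕ} (hps : p ≤ s') (c τ : ℝ) :
    |iteratedDeriv p (fun x : ℝ => x ^ s' * Real.exp (c * s' * x)) τ| ≤
      (s' : ℝ) ^ p * |τ| ^ (s' - p) * Real.exp (c * s' * τ) * (1 + |c * τ|) ^ p := by
  have factor_rate : (s' : ℝ) + |c * s' * τ| = s' * (1 + |c * τ|) := by
    rw [mul_right_comm, abs_mul (c * τ), Nat.abs_cast]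
    ring
  calc
    |iteratedDeriv p (fun x : ℝ => x ^ s' * Real.exp (c * s' * x)) τ|
      ≤ |τ| ^ (s' - p) * Real.exp (c * s' * τ) * (s' + |c * s' * τ|) ^ p :=
        abs_iteratedDeriv_pow_mul_exp_le hps (c * s') τ
    _ = (s' : ℝ) ^ p * |τ| ^ (s' - p) * Real.exp (c * s' * τ) * (1 + |c * τ|) ^ p := by
        rw [factor_rate, mul_pow]
        ring

/-- derivative estimate from the proof of Subtheorem 1 of the
paper.  For naturals `p ≤ s'` and reals `c, τ ≥ 0`:
`(d/dx)^p [x^{s'} e^{c s' x}](τ) ≤ (s')^p τ^{s'-p} e^{c s' τ} (1 + c τ)^p`. -/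
theorem stmt_15 (p s' : ℕ) (hps : p ≤ s') (c τ : ℝ) (hc : 0 ≤ c) (hτ : 0 ≤ τ) :
    iteratedDeriv p (fun x : ℝ => x ^ s' * Real.exp (c * s' * x)) τ ≤
      (s' : ℝ) ^ p * τ ^ (s' - p) * Real.exp (c * s' * τ) * (1 + c * τ) ^ p := by
  simpa only [abs_of_nonneg hτ, abs_of_nonneg (mul_nonneg hc hτ)] using
    (le_abs_self _).trans (stmt_15_general hps c τ)
end

section
/- Let T ≥ 0 be a real number and let (f_m)_{m∈ℕ} be a sequence of continuous functions f_m : ℝ → ℝ that are nonnegative on [0,T] and satisfy f_m(τ) ≤ f_m(0) + 2·∫₀^τ f_{m+1}(s) ds for every m ∈ ℕ and every τ ∈ [0,T]. Assume there exist real numbers c_m with f_m(s) ≤ c_m for all s ∈ [0,T] and all m, such that (2T)^M·c_M/M! → 0 as M → ∞. Then for every τ ∈ [0,T] for which the series ∑_{m=0}^∞ (2τ)^m·f_m(0)/m! converges, one has f_0(τ) ≤ ∑_{m=0}^∞ (2τ)^m·f_m(0)/m!. -/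
/-!
Substituting the recursion `f m t ≤ f m a + K ∫ₐᵗ f (m + 1)` into itself `n` times gives a
Taylor-type bound for `f 0 t`: the `n`-th partial sum of `∑ (K (t - a)) ^ m * f m a / m!`, plus
the remainder `(K (t - a)) ^ n * c n / n!` produced by the last bound `f n ≤ c n`. Letting `n → ∞`
removes the remainder.
-/

open Filter MeasureTheory Set
open scoped Nat Topology

theorem tendsto_pow_mul_zero_of_norm_le {𝕜 : Type*} [NormedDivisionRing 𝕜] {u v : 𝕜} {c : ℕ → 𝕜}
    (hvu : ‖v‖ ≤ ‖u‖) (hu : Tendsto (fun n => u ^ n * c n) atTop (𝓝 0)) :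
    Tendsto (fun n => v ^ n * c n) atTop (𝓝 0) := by
  refine squeeze_zero_norm (fun n => ?_) (tendsto_zero_iff_norm_tendsto_zero.mp hu)
  simp only [norm_mul, norm_pow]
  gcongr

theorem mul_integral_pow_mul_div_factorial (K a t x : ℝ) (n : ℕ) :
    K * ∫ s in a..t, (K * (s - a)) ^ n * x / n ! =
      (K * (t - a)) ^ (n + 1) * x / (n + 1)! := by
  have integral_pow_sub : ∫ s in a..t, (s - a) ^ n = (t - a) ^ (n + 1) / (n + 1) := by
    simp [intervalIntegral.integral_comp_sub_right (fun s => s ^ n)]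
  simp only [mul_pow, intervalIntegral.integral_div, intervalIntegral.integral_mul_const,
    intervalIntegral.integral_const_mul, integral_pow_sub, Nat.factorial_succ, Nat.cast_mul,
    Nat.cast_succ]
  field_simp
  ring

theorem add_mul_integral_sum_add_eq_sum_add (K a t r : ℝ) (x : ℕ → ℝ) (n : ℕ) :
    x 0 + K * ∫ s in a..t,
        (∑ m ∈ Finset.range n, (K * (s - a)) ^ m * x (m + 1) / m !
          + (K * (s - a)) ^ n * r / n !) =
      ∑ m ∈ Finset.range (n + 1), (K * (t - a)) ^ m * x m / m !
        + (K * (t - a)) ^ (n + 1) * r / (n + 1)! := by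
  have term_integrable (m : ℕ) (y : ℝ) :
      IntervalIntegrable (fun s => (K * (s - a)) ^ m * y / m !) volume a t :=
    Continuous.intervalIntegrable (by fun_prop) a t
  rw [intervalIntegral.integral_add (Continuous.intervalIntegrable (by fun_prop) a t)
      (term_integrable n r),
    intervalIntegral.integral_finsetSum fun m _ => term_integrable m (x (m + 1)),
    mul_add, Finset.mul_sum, Finset.sum_range_succ']
  simp only [mul_integral_pow_mul_div_factorial, pow_zero, one_mul, Nat.factorial_zero,
    Nat.cast_one, div_one]
  ring

section IntegralRecursion

variable {K a b : ℝ} {f : ℕ → ℝ → ℝ}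

theorem le_sum_add_of_le_add_mul_integral (hK : 0 ≤ K)
    (hint : ∀ m, IntervalIntegrable (f m) volume a b)
    (hrec : ∀ m, ∀ t ∈ Icc a b, f m t ≤ f m a + K * ∫ s in a..t, f (m + 1) s)
    {n : ℕ} {r : ℝ} (hr : ∀ s ∈ Icc a b, f n s ≤ r) {t : ℝ} (ht : t ∈ Icc a b) :
    f 0 t ≤ ∑ m ∈ Finset.range n, (K * (t - a)) ^ m * f m a / m !
      + (K * (t - a)) ^ n * r / n ! := by
  induction n generalizing f t with
  | zero => simpa using hr t ht
  | succ n ih =>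
    have bound_shift : ∀ s ∈ Icc a t, f 1 s ≤
        ∑ m ∈ Finset.range n, (K * (s - a)) ^ m * f (m + 1) a / m !
          + (K * (s - a)) ^ n * r / n ! := fun s hs =>
      ih (f := fun m => f (m + 1)) (fun m => hint (m + 1)) (fun m => hrec (m + 1)) hr
        (Icc_subset_Icc_right ht.2 hs)
    have integrable_shift : IntervalIntegrable (f 1) volume a t :=
      (hint 1).mono_set (uIcc_subset_uIcc_left (Icc_subset_uIcc ht))
    calc f 0 t ≤ f 0 a + K * ∫ s in a..t, f 1 s := hrec 0 t ht
      _ ≤ f 0 a + K * ∫ s in a..t,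
            (∑ m ∈ Finset.range n, (K * (s - a)) ^ m * f (m + 1) a / m !
              + (K * (s - a)) ^ n * r / n !) := by
        gcongr
        exact intervalIntegral.integral_mono_on ht.1 integrable_shift
          (Continuous.intervalIntegrable (by fun_prop) a t) bound_shift
      _ = _ := add_mul_integral_sum_add_eq_sum_add K a t r (fun m => f m a) n

theorem stmt_16_general (hK : 0 ≤ K)
    (hint : ∀ m, IntervalIntegrable (f m) volume a b)
    (hrec : ∀ m, ∀ t ∈ Icc a b, f m t ≤ f m a + K * ∫ s in a..t, f (m + 1) s)
    {c : ℕ → ℝ} (hc : ∀ m, ∀ s ∈ Icc a b, f m s ≤ c m)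
    (hlim : Tendsto (fun n : ℕ => (K * (b - a)) ^ n * c n / n !) atTop (𝓝 0))
    {t : ℝ} (ht : t ∈ Icc a b) {S : ℝ}
    (hS : Tendsto (fun n => ∑ m ∈ Finset.range n, (K * (t - a)) ^ m * f m a / m !)
      atTop (𝓝 S)) :
    f 0 t ≤ S := by
  have norm_le : ‖K * (t - a)‖ ≤ ‖K * (b - a)‖ := by
    have hta : 0 ≤ t - a := sub_nonneg.mpr ht.1
    exact abs_le_abs_of_nonneg (by positivity) (by gcongr; exact ht.2)
  have remainder_tendsto : Tendsto (fun n : ℕ => (K * (t - a)) ^ n * c n / n !) atTop (𝓝 0) := by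
    simp only [mul_div_assoc] at hlim ⊢
    exact tendsto_pow_mul_zero_of_norm_le norm_le hlim
  have bound_tendsto := hS.add remainder_tendsto
  rw [add_zero] at bound_tendsto
  exact ge_of_tendsto' bound_tendsto fun n =>
    le_sum_add_of_le_add_mul_integral hK hint hrec (hc n) ht

end IntegralRecursion

/-- iterated-integration step in the proof of Subtheorem 1 of
the paper.  Let `f_m : ℝ → ℝ` be continuous, nonnegative on `[0, T]`, with
`f_m(τ) ≤ f_m(0) + 2∫₀^τ f_{m+1}` on `[0, T]`, and uniformly bounded by
constants `c_m` with `(2T)^M c_M / M! → 0`.  Then for every `τ ∈ [0, T]` for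
which `∑_m (2τ)^m f_m(0)/m!` converges, `f_0(τ) ≤ ∑_m (2τ)^m f_m(0)/m!`. -/
theorem stmt_16 (T : ℝ) (hT : 0 ≤ T) (f : ℕ → ℝ → ℝ)
    (hcont : ∀ m, Continuous (f m))
    (hnonneg : ∀ m, ∀ s ∈ Set.Icc (0 : ℝ) T, 0 ≤ f m s)
    (hrec : ∀ m, ∀ τ ∈ Set.Icc (0 : ℝ) T,
      f m τ ≤ f m 0 + 2 * ∫ s in (0 : ℝ)..τ, f (m + 1) s)
    (c : ℕ → ℝ) (hc : ∀ m, ∀ s ∈ Set.Icc (0 : ℝ) T, f m s ≤ c m)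
    (hlim : Filter.Tendsto (fun M : ℕ => (2 * T) ^ M * c M / Nat.factorial M)
      Filter.atTop (nhds 0))
    (τ : ℝ) (hτ : τ ∈ Set.Icc (0 : ℝ) T)
    (hsumm : Summable (fun m : ℕ => (2 * τ) ^ m * f m 0 / Nat.factorial m)) :
    f 0 τ ≤ ∑' m : ℕ, (2 * τ) ^ m * f m 0 / Nat.factorial m := by
  simpa only [sub_zero] using stmt_16_general zero_le_two
    (fun m => (hcont m).intervalIntegrable 0 T) hrec hc (by simpa only [sub_zero] using hlim)
    hτ (by simpa only [sub_zero] using hsumm.hasSum.tendsto_sum_nat)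
end

section
/- Let Λ be a finite set and d : Λ → Λ → ℝ a nonnegative function satisfying the triangle inequality d(i,j) ≤ d(i,k) + d(k,j) for all i, j, k ∈ Λ. Let λ ≥ 0 be a real number such that ∑_{k∈Λ} exp(−d(i,k)/4) ≤ λ for every i ∈ Λ. Then for all i, j ∈ Λ: ∑_{k∈Λ} exp(−d(i,k) − d(k,j)) ≤ λ · exp(−3·d(i,j)/4). -/
theorem exp_neg_sub_le_exp_mul_exp {a b c α : ℝ} (hα₀ : 0 ≤ α) (hα₁ : α ≤ 1) (hb : 0 ≤ b)
    (hc : c ≤ a + b) :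
    Real.exp (-a - b) ≤ Real.exp (-(α * a)) * Real.exp (-((1 - α) * c)) := by
  have h_weighted : α * a + (1 - α) * c ≤ a + b := calc
    α * a + (1 - α) * c ≤ α * a + (1 - α) * (a + b) := by
      have := sub_nonneg.mpr hα₁
      gcongr
    _ = a + b - α * b := by ring
    _ ≤ a + b := sub_le_self _ (mul_nonneg hα₀ hb)
  rw [← Real.exp_add, Real.exp_le_exp]
  linarith

theorem stmt_18_general {Λ : Type*} {d : Λ → Λ → ℝ}
    (hd0 : ∀ i j, 0 ≤ d i j) (htri : ∀ i j k, d i j ≤ d i k + d k j)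
    {α lam : ℝ} (hα₀ : 0 ≤ α) (hα₁ : α ≤ 1) {i : Λ}
    (hsum : Summable fun k ↦ Real.exp (-(α * d i k)))
    (hbound : ∑' k, Real.exp (-(α * d i k)) ≤ lam) (j : Λ) :
    (Summable fun k ↦ Real.exp (-(d i k) - d k j)) ∧
      ∑' k, Real.exp (-(d i k) - d k j) ≤ lam * Real.exp (-((1 - α) * d i j)) := by
  have h_le (k : Λ) : Real.exp (-(d i k) - d k j) ≤
      Real.exp (-(α * d i k)) * Real.exp (-((1 - α) * d i j)) :=
    exp_neg_sub_le_exp_mul_exp hα₀ hα₁ (hd0 k j) (htri i j k)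
  have h_majorant := hsum.mul_right (Real.exp (-((1 - α) * d i j)))
  have h_summable : Summable fun k ↦ Real.exp (-(d i k) - d k j) :=
    h_majorant.of_nonneg_of_le (fun _ ↦ Real.exp_nonneg _) h_le
  refine ⟨h_summable, ?_⟩
  calc
    ∑' k, Real.exp (-(d i k) - d k j)
        ≤ ∑' k, Real.exp (-(α * d i k)) * Real.exp (-((1 - α) * d i j)) :=
      h_summable.tsum_le_tsum h_le h_majorant
    _ = (∑' k, Real.exp (-(α * d i k))) * Real.exp (-((1 - α) * d i j)) := tsum_mul_right
    _ ≤ lam * Real.exp (-((1 - α) * d i j)) := by gcongr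

/-- triangle-inequality convolution bound, used e.g. in the
proof of Lemma 12 of the paper.  Let `Λ` be finite, `d : Λ → Λ → ℝ`
nonnegative and satisfying the triangle inequality, and `lam ≥ 0` with
`∑_k exp(-d(i,k)/4) ≤ lam` for all `i`.  Then for all `i, j`:
`∑_k exp(-d(i,k) - d(k,j)) ≤ lam · exp(-3 d(i,j)/4)`. -/
theorem stmt_18 {Λ : Type*} [Fintype Λ] (d : Λ → Λ → ℝ)
    (hd0 : ∀ i j : Λ, 0 ≤ d i j)
    (htri : ∀ i j k : Λ, d i j ≤ d i k + d k j)
    (lam : ℝ) (hlam : 0 ≤ lam)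
    (hbound : ∀ i : Λ, ∑ k : Λ, Real.exp (-(d i k) / 4) ≤ lam)
    (i j : Λ) :
    ∑ k : Λ, Real.exp (-(d i k) - d k j) ≤ lam * Real.exp (-(3 * d i j) / 4) := by
  have h_quarter (x : ℝ) : -(1 / 4 * x) = -x / 4 := by ring
  have h_three_quarters (x : ℝ) : -((1 - 1 / 4) * x) = -(3 * x) / 4 := by ring
  have h := stmt_18_general (α := 1 / 4) (lam := lam) hd0 htri (by norm_num) (by norm_num)
    .of_finite (by simpa only [tsum_fintype, h_quarter] using hbound i) j
  simpa only [tsum_fintype, h_three_quarters] using h.2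
end
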